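/- arXiv:math/0306218 — 2 statements merged into one kernel-verified Lean document; each statement's English description precedes it below -/
import Mathlib

section
/- For every θ with 0 < θ < π and every α > 1, D_α = sin(θ/α)/sin(π/α). Consequently α ↦ D_α is strictly decreasing on (1,∞), D_α → ∞ as α → 1⁺, D_α → θ/π as α → ∞, and α_θ := 1 + θ/π is the unique α > 1 with D_α = 1. -/
open Filter Asymptotics MeasureTheory
open scoped ENNReal Topology

/-- `Theta θ E' E` is the argument of the complex number `E' + E·e^{iθ}`;
for `0 < θ < π` and `E', E > 0` it lies in `(0, θ)` and equals
`arctan (sin θ / (E'/E + cos θ))` with the branch taken in `(0, θ)`. -/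
noncomputable def Theta (θ E' E : ℝ) : ℝ :=
  Complex.arg ((E' : ℂ) + (E : ℂ) * Complex.exp (θ * Complex.I))

/-- `phi θ X Y j = (1/π) · ∑_{k ≥ 1} Θ(X_k, Y_j) ∈ (0, ∞]`, where sequences are
indexed by `ℕ` and only the values at indices `k ≥ 1` are used. -/
noncomputable def phi (θ : ℝ) (X Y : ℕ → ℝ) (j : ℕ) : ℝ≥0∞ :=
  ENNReal.ofReal (1 / Real.pi) * ∑' k : ℕ, ENNReal.ofReal (Theta θ (X (k + 1)) (Y j))

/-- `Pker θ E E' = E·E' / (E² + 2·cos θ·E·E' + E'²)`. -/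
noncomputable def Pker (θ E E' : ℝ) : ℝ :=
  E * E' / (E ^ 2 + 2 * Real.cos θ * E * E' + E' ^ 2)

/-- The drift `D_α = (1/π) ∫_0^∞ Θ(s^α, 1) ds`. -/
noncomputable def Drift (θ α : ℝ) : ℝ :=
  (1 / Real.pi) * ∫ s in Set.Ioi (0 : ℝ), Theta θ (s ^ α) 1

/-- `S_ε = ∫_0^∞ s^{-ε} / (s^{α_θ} + 2 cos θ + s^{-α_θ}) ds` with `α_θ = 1 + θ/π`. -/
noncomputable def Sfun (θ ε : ℝ) : ℝ :=
  ∫ s in Set.Ioi (0 : ℝ), s ^ (-ε) /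
    (s ^ (1 + θ / Real.pi) + 2 * Real.cos θ + s ^ (-(1 + θ / Real.pi)))

/-!
The function `G(z) = ∫₀^∞ log (1 + z s^{-α}) ds` is holomorphic on the slit plane, and for `r > 0`
the substitution `s ↦ r^{1/α} s` gives `G(r) = r^{1/α} G(1)`; by the identity theorem
`G(z) = z^{1/α} G(1)`. Since `Θ(s^α, 1) = arg (1 + e^{iθ} s^{-α})`, taking imaginary parts at
`z = e^{iθ}` yields `π D_α = sin(θ/α) G(1)` for `0 < θ < π`. Both sides are continuous up to
`θ = π`, where `arg (1 - s^{-α})` is `π` on `(0, 1)` and `0` beyond; hence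
`G(1) = π / sin(π/α)`. Monotonicity in `α` comes from the Wronskian
`a cos(at) sin(bt) - b sin(at) cos(bt)` of `sin(at)` and `sin(bt)`, which vanishes at `t = 0` and
has derivative `(b² - a²) sin(at) sin(bt)`.
-/

section Trigonometry

open Set

lemma sin_mul_pos_of_mem_Ioo {a t : ℝ} (ha : 0 < a) (ht : t ∈ Ioo 0 (Real.pi / a)) :
    0 < Real.sin (a * t) :=
  Real.sin_pos_of_pos_of_lt_pi (mul_pos ha ht.1) ((lt_div_iff₀' ha).1 ht.2)

lemma mul_sin_mul_cos_lt_mul_cos_mul_sin {a b : ℝ} (ha : 0 < a) (hab : a < b) {t : ℝ}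
    (ht : t ∈ Ioo 0 (Real.pi / b)) :
    b * (Real.sin (a * t) * Real.cos (b * t)) < a * (Real.cos (a * t) * Real.sin (b * t)) := by
  have hb : 0 < b := ha.trans hab
  let W : ℝ → ℝ := fun t ↦
    a * (Real.cos (a * t) * Real.sin (b * t)) - b * (Real.sin (a * t) * Real.cos (b * t))
  have hW (t : ℝ) :
      HasDerivAt W ((b ^ 2 - a ^ 2) * (Real.sin (a * t) * Real.sin (b * t))) t := by
    have hmul (c : ℝ) : HasDerivAt (fun t ↦ c * t) c t := by
      simpa using (hasDerivAt_id t).const_mul c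
    exact ((((hmul a).cos.mul (hmul b).sin).const_mul a).sub
      (((hmul a).sin.mul (hmul b).cos).const_mul b)).congr_deriv (by ring)
  have hmono : StrictMonoOn W (Icc 0 (Real.pi / b)) := by
    refine strictMonoOn_of_deriv_pos (convex_Icc _ _)
      (fun t _ ↦ (hW t).continuousAt.continuousWithinAt) fun t ht ↦ ?_
    rw [interior_Icc] at ht
    have hta : t ∈ Ioo 0 (Real.pi / a) :=
      Ioo_subset_Ioo_right (div_le_div_of_nonneg_left Real.pi_pos.le ha hab.le) ht
    rw [(hW t).deriv]
    exact mul_pos (sub_pos.2 (pow_lt_pow_left₀ hab ha.le two_ne_zero))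
      (mul_pos (sin_mul_pos_of_mem_Ioo ha hta) (sin_mul_pos_of_mem_Ioo hb ht))
  have := hmono (left_mem_Icc.2 (by positivity)) (Ioo_subset_Icc_self ht) ht.1
  simpa [W] using this

lemma strictMonoOn_sin_mul_div_sin_mul {a b : ℝ} (ha : 0 < a) (hab : a < b) :
    StrictMonoOn (fun t ↦ Real.sin (a * t) / Real.sin (b * t)) (Ioo 0 (Real.pi / b)) := by
  have hb : 0 < b := ha.trans hab
  have hsin {t : ℝ} (ht : t ∈ Ioo 0 (Real.pi / b)) : 0 < Real.sin (b * t) :=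
    sin_mul_pos_of_mem_Ioo hb ht
  have hderiv {t : ℝ} (ht : t ∈ Ioo 0 (Real.pi / b)) :
      HasDerivAt (fun t ↦ Real.sin (a * t) / Real.sin (b * t))
        ((a * (Real.cos (a * t) * Real.sin (b * t)) - b * (Real.sin (a * t) * Real.cos (b * t)))
          / Real.sin (b * t) ^ 2) t := by
    have hmul (c : ℝ) : HasDerivAt (fun t ↦ c * t) c t := by
      simpa using (hasDerivAt_id t).const_mul c
    exact ((hmul a).sin.div (hmul b).sin (hsin ht).ne').congr_deriv (by ring)
  refine strictMonoOn_of_deriv_pos (convex_Ioo _ _)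
    (fun t ht ↦ (hderiv ht).continuousAt.continuousWithinAt) fun t ht ↦ ?_
  rw [interior_Ioo] at ht
  rw [(hderiv ht).deriv]
  exact div_pos (sub_pos.2 (mul_sin_mul_cos_lt_mul_cos_mul_sin ha hab ht)) (pow_pos (hsin ht) 2)

lemma strictAntiOn_sin_div_div_sin_div {a b : ℝ} (ha : 0 < a) (hab : a < b) :
    StrictAntiOn (fun x ↦ Real.sin (a / x) / Real.sin (b / x)) (Ioi (b / Real.pi)) := by
  have hbpi : 0 < b / Real.pi := div_pos (ha.trans hab) Real.pi_pos
  have hinv : MapsTo Inv.inv (Ioi (b / Real.pi)) (Ioo 0 (Real.pi / b)) := fun x hx ↦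
    ⟨inv_pos.2 (hbpi.trans hx), inv_div b Real.pi ▸ inv_strictAnti₀ hbpi hx⟩
  exact (strictMonoOn_sin_mul_div_sin_mul ha hab).comp_strictAntiOn
    (fun x hx y _ hxy ↦ inv_strictAnti₀ (hbpi.trans hx) hxy) hinv

lemma sin_pi_div_pos {x : ℝ} (hx : 1 < x) : 0 < Real.sin (Real.pi / x) :=
  Real.sin_pos_of_pos_of_lt_pi (div_pos Real.pi_pos (one_pos.trans hx)) (div_lt_self Real.pi_pos hx)

lemma tendsto_sin_div_div_sin_pi_div_nhdsGT_one {a : ℝ} (ha : 0 < Real.sin a) :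
    Tendsto (fun x ↦ Real.sin (a / x) / Real.sin (Real.pi / x)) (𝓝[>] 1) atTop := by
  have hsin (c : ℝ) : Tendsto (fun x ↦ Real.sin (c / x)) (𝓝[>] 1) (𝓝 (Real.sin c)) := by
    have : ContinuousAt (fun x ↦ Real.sin (c / x)) 1 := by fun_prop (disch := norm_num)
    simpa using this.tendsto.mono_left nhdsWithin_le_nhds
  have hpos : ∀ᶠ x in 𝓝[>] (1 : ℝ), 0 < Real.sin (Real.pi / x) := by
    filter_upwards [self_mem_nhdsWithin] with x hx
    exact sin_pi_div_pos hx
  exact (hsin a).pos_mul_atTop ha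
    (tendsto_inv_nhdsGT_zero.comp
      (tendsto_nhdsWithin_iff.2 ⟨by simpa using hsin Real.pi, hpos⟩))

lemma tendsto_mul_sin_div_atTop (a : ℝ) :
    Tendsto (fun x ↦ x * Real.sin (a / x)) atTop (𝓝 a) := by
  have hsinc : Tendsto (fun x ↦ a * Real.sinc (a / x)) atTop (𝓝 a) := by
    simpa using ((Real.continuous_sinc.tendsto 0).comp
      (tendsto_id.const_div_atTop a)).const_mul a
  refine hsinc.congr' ?_
  filter_upwards [eventually_ne_atTop 0] with x hx
  rcases eq_or_ne a 0 with rfl | ha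
  · simp
  · rw [Real.sinc_of_ne_zero (div_ne_zero ha hx)]
    field_simp

lemma tendsto_sin_div_div_sin_div_atTop (a : ℝ) {b : ℝ} (hb : b ≠ 0) :
    Tendsto (fun x ↦ Real.sin (a / x) / Real.sin (b / x)) atTop (𝓝 (a / b)) := by
  refine ((tendsto_mul_sin_div_atTop a).div (tendsto_mul_sin_div_atTop b) hb).congr' ?_
  filter_upwards [eventually_ne_atTop 0] with x hx
  exact mul_div_mul_left _ _ hx

end Trigonometry

section SlitPlane

open Complex Set

lemma one_add_mul_ofReal_mem_slitPlane {z : ℂ} (hz : z ∈ slitPlane) {x : ℝ} (hx : 0 ≤ x) :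
    1 + z * x ∈ slitPlane := by
  rcases hx.eq_or_lt with rfl | hx
  · simp
  rcases mem_slitPlane_iff.1 hz with hre | him
  · refine mem_slitPlane_iff.2 (.inl ?_)
    rw [add_re, one_re, re_mul_ofReal]
    positivity
  · refine mem_slitPlane_iff.2 (.inr ?_)
    simpa using ⟨him, hx.ne'⟩

lemma ofReal_add_mem_slitPlane {z : ℂ} (hz : z ∈ slitPlane) {x : ℝ} (hx : 0 ≤ x) :
    x + z ∈ slitPlane := by
  rw [mem_slitPlane_iff] at hz ⊢
  simp only [add_re, ofReal_re, add_im, ofReal_im, zero_add]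
  exact hz.imp_left (add_pos_of_nonneg_of_pos hx)

lemma mul_one_add_le_norm_one_add_mul_ofReal {z : ℂ} {δ : ℝ} (hδ : 0 < δ)
    (hball : Metric.ball z δ ⊆ slitPlane) {x : ℝ} (hx : 0 ≤ x) :
    δ * (1 + x) ≤ (1 + δ + ‖z‖) * ‖1 + z * x‖ := by
  have hdist : δ * x ≤ ‖1 + z * x‖ := by
    rcases hx.eq_or_lt with rfl | hx
    · simp
    have hnotMem : (↑(-x⁻¹) : ℂ) ∉ Metric.ball z δ := fun h ↦ by
      have := ofReal_mem_slitPlane.1 (hball h)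
      linarith [inv_pos.2 hx]
    have hle : δ ≤ ‖(↑(-x⁻¹) : ℂ) - z‖ := by
      simpa [dist_eq_norm] using hnotMem
    have hfactor : 1 + z * x = -x * (↑(-x⁻¹) - z) := by
      have : (x : ℂ) ≠ 0 := ofReal_ne_zero.2 hx.ne'
      push_cast
      field_simp
      ring
    rw [hfactor, norm_mul, norm_neg, norm_real, Real.norm_of_nonneg hx.le, mul_comm]
    gcongr
  have htriangle : 1 ≤ ‖1 + z * x‖ + ‖z‖ * x := by
    have := norm_sub_le (1 + z * x) (z * x)
    simpa [abs_of_nonneg hx] using this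
  calc δ * (1 + x) ≤ δ * (‖1 + z * x‖ + ‖z‖ * x) + δ * x := by nlinarith
    _ = δ * ‖1 + z * x‖ + (1 + ‖z‖) * (δ * x) := by ring
    _ ≤ δ * ‖1 + z * x‖ + (1 + ‖z‖) * ‖1 + z * x‖ := by gcongr
    _ = (1 + δ + ‖z‖) * ‖1 + z * x‖ := by ring

lemma norm_ofReal_div_one_add_mul_le {z : ℂ} {δ : ℝ} (hδ : 0 < δ)
    (hball : Metric.ball z δ ⊆ slitPlane) {x : ℝ} (hx : 0 ≤ x) :
    ‖x / (1 + z * x)‖ ≤ (1 + δ + ‖z‖) / δ * (x / (1 + x)) := by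
  have hne := slitPlane_ne_zero
    (one_add_mul_ofReal_mem_slitPlane (hball (Metric.mem_ball_self hδ)) hx)
  rw [norm_div, norm_real, Real.norm_of_nonneg hx, div_mul_div_comm,
    div_le_div_iff₀ (norm_pos_iff.2 hne) (by positivity)]
  calc x * (δ * (1 + x)) ≤ x * ((1 + δ + ‖z‖) * ‖1 + z * x‖) :=
        mul_le_mul_of_nonneg_left (mul_one_add_le_norm_one_add_mul_ofReal hδ hball hx) hx
    _ = (1 + δ + ‖z‖) * x * ‖1 + z * x‖ := by ring

lemma exists_ball_subset_slitPlane_norm_ofReal_div_le {z : ℂ} (hz : z ∈ slitPlane) :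
    ∃ ε > 0, Metric.ball z ε ⊆ slitPlane ∧ ∃ C, ∀ w ∈ Metric.ball z ε, ∀ x : ℝ, 0 ≤ x →
      ‖x / (1 + w * x)‖ ≤ C * (x / (1 + x)) := by
  obtain ⟨ε, hε, hball⟩ := Metric.isOpen_iff.1 isOpen_slitPlane z hz
  refine ⟨ε / 2, half_pos hε, (Metric.ball_subset_ball (by linarith)).trans hball,
    (1 + ε / 2 + (‖z‖ + ε / 2)) / (ε / 2), fun w hw x hx ↦ ?_⟩
  have hsub : Metric.ball w (ε / 2) ⊆ slitPlane :=
    (Metric.ball_subset_ball' (by linarith [Metric.mem_ball.1 hw])).trans hball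
  have hnorm : ‖w‖ ≤ ‖z‖ + ε / 2 := by
    linarith [norm_le_norm_add_norm_sub' w z, mem_ball_iff_norm.1 hw]
  refine (norm_ofReal_div_one_add_mul_le (half_pos hε) hsub hx).trans ?_
  gcongr

lemma hasDerivAt_log_one_add_mul_ofReal {z : ℂ} (hz : z ∈ slitPlane) {x : ℝ} (hx : 0 ≤ x) :
    HasDerivAt (fun w : ℂ ↦ log (1 + w * x)) (x / (1 + z * x)) z := by
  have hlin : HasDerivAt (fun w : ℂ ↦ 1 + w * x) x z := by
    simpa using ((hasDerivAt_id z).mul_const (x : ℂ)).const_add 1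
  exact hlin.clog (one_add_mul_ofReal_mem_slitPlane hz hx)

lemma isBigO_log_one_add_mul_ofReal (z : ℂ) :
    (fun x : ℝ ↦ log (1 + z * x)) =O[𝓝 0] fun x ↦ x := by
  have hderiv : HasDerivAt (fun x : ℝ ↦ log (1 + z * x)) z 0 := by
    have hlin : HasDerivAt (fun x : ℝ ↦ 1 + z * x) z 0 := by
      simpa using ((hasDerivAt_id (0 : ℝ)).ofReal_comp.const_mul z).const_add 1
    simpa using hlin.clog_real (by simp)
  simpa using hderiv.isBigO_sub

variable {E : Type*} [NormedAddCommGroup E] [NormedSpace ℂ E] [CompleteSpace E]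

lemma eqOn_slitPlane_of_forall_ofReal_eq {f g : ℂ → E} (hf : DifferentiableOn ℂ f slitPlane)
    (hg : DifferentiableOn ℂ g slitPlane) (hfg : ∀ x : ℝ, 0 < x → f x = g x) :
    EqOn f g slitPlane := by
  have hconn : IsPreconnected slitPlane :=
    (starConvex_one_slitPlane.isPathConnected one_mem_slitPlane).isConnected.isPreconnected
  have htendsto : Tendsto ((↑) : ℝ → ℂ) (𝓝[>] 1) (𝓝[≠] 1) := by
    refine tendsto_nhdsWithin_iff.2 ⟨?_, ?_⟩
    · exact (continuous_ofReal.tendsto' 1 1 ofReal_one).mono_left nhdsWithin_le_nhds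
    · filter_upwards [self_mem_nhdsWithin] with x hx
      exact ofReal_eq_one.not.2 (ne_of_gt hx)
  have hfreq : ∃ᶠ z in 𝓝[≠] (1 : ℂ), f z = g z := by
    refine htendsto.frequently (Eventually.frequently ?_)
    filter_upwards [self_mem_nhdsWithin] with x hx
    exact hfg x (one_pos.trans hx)
  exact (hf.analyticOnNhd isOpen_slitPlane).eqOn_of_preconnected_of_frequently_eq
    (hg.analyticOnNhd isOpen_slitPlane) hconn one_mem_slitPlane hfreq

end SlitPlane

section Argument

open Complex

lemma abs_arg_one_add_le (w : ℂ) : |arg (1 + w)| ≤ 3 * Real.pi * (‖w‖ / (1 + ‖w‖)) := by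
  rw [mul_div_assoc', le_div_iff₀ (by positivity)]
  rcases le_total ‖w‖ (1 / 2) with hw | hw
  · have hlog : |arg (1 + w)| ≤ 3 / 2 * ‖w‖ := by
      rw [← log_im]
      exact (abs_im_le_norm _).trans (norm_log_one_add_half_le_self hw)
    calc |arg (1 + w)| * (1 + ‖w‖) ≤ 3 / 2 * ‖w‖ * (1 + 1) := by gcongr; linarith
      _ ≤ 3 * Real.pi * ‖w‖ := by nlinarith [Real.pi_gt_three, norm_nonneg w]
  · calc |arg (1 + w)| * (1 + ‖w‖) ≤ Real.pi * (1 + ‖w‖) := by gcongr; exact abs_arg_le_pi _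
      _ ≤ 3 * Real.pi * ‖w‖ := by nlinarith [Real.pi_pos]

lemma continuousOn_arg_im_nonneg : ContinuousOn arg {z | 0 ≤ z.im ∧ z ≠ 0} := by
  rintro z ⟨_, hz⟩
  by_cases hslit : z ∈ slitPlane
  · exact (continuousAt_arg hslit).continuousWithinAt
  · obtain ⟨hre, him0⟩ : z.re ≤ 0 ∧ z.im = 0 := by
      simpa only [mem_slitPlane_iff, not_or, not_lt, not_not] using hslit
    have hre0 : z.re ≠ 0 := fun h ↦ hz (Complex.ext h him0)
    exact (continuousWithinAt_arg_of_re_neg_of_im_zero (hre.lt_of_ne hre0) him0).mono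
      fun _ hw ↦ hw.1

end Argument

section LogIntegral

open Complex Set

variable {α : ℝ}

lemma integrableOn_rpow_neg_div_one_add (hα : 1 < α) :
    IntegrableOn (fun s : ℝ ↦ s ^ (-α) / (1 + s ^ (-α))) (Ioi 0) := by
  have hcont : ContinuousOn (fun s : ℝ ↦ (1 + s ^ α)⁻¹) (Ici 0) := by
    refine (Real.continuous_rpow_const (by linarith)).continuousOn.const_add 1 |>.inv₀ ?_
    intro s hs
    have : 0 ≤ s ^ α := Real.rpow_nonneg hs α
    positivity
  have hbigO : (fun s : ℝ ↦ (1 + s ^ α)⁻¹) =O[atTop] fun s ↦ s ^ (-α) := by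
    refine IsBigO.of_norm_eventuallyLE ?_
    filter_upwards [eventually_gt_atTop 0] with s hs
    rw [Real.norm_of_nonneg (by positivity), Real.rpow_neg hs.le]
    gcongr
    linarith
  have hint : IntegrableOn (fun s : ℝ ↦ (1 + s ^ α)⁻¹) (Ici 0) :=
    (hcont.locallyIntegrableOn measurableSet_Ici).integrableOn_of_isBigO_atTop hbigO
      (integrableAtFilter_rpow_atTop_iff.2 (by linarith))
  refine (hint.mono_set Ioi_subset_Ici_self).congr_fun (fun s (hs : 0 < s) ↦ ?_) measurableSet_Ioi
  rw [Real.rpow_neg hs.le]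
  field_simp
  ring

lemma log_one_add_mul_rpow_neg {z : ℂ} (hz : z ∈ slitPlane) {s : ℝ} (hs : 0 < s) :
    log (1 + z * ↑(s ^ (-α))) = log (↑(s ^ α) + z) - ↑(α * Real.log s) := by
  have hfactor : (↑(s ^ α) + z : ℂ) = ↑(s ^ α) * (1 + z * ↑(s ^ (-α))) := by
    have : (s : ℂ) ^ (α : ℂ) ≠ 0 := by
      rw [← ofReal_cpow hs.le]
      exact_mod_cast (Real.rpow_pos_of_pos hs α).ne'
    rw [Real.rpow_neg hs.le]
    push_cast [ofReal_cpow hs.le]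
    field_simp
  have hne := slitPlane_ne_zero
    (one_add_mul_ofReal_mem_slitPlane hz (Real.rpow_nonneg hs.le (-α)))
  rw [hfactor, log_ofReal_mul (Real.rpow_pos_of_pos hs α) hne, Real.log_rpow hs]
  ring

/-- The integral `∫₀^∞ log (1 + z s^{-α}) ds` of the principal branch of the logarithm. Its
imaginary part at `z = e^{iθ}` is the integral defining the drift `D_α`. -/
noncomputable def logIntegral (α : ℝ) (z : ℂ) : ℂ :=
  ∫ s in Ioi (0 : ℝ), log (1 + z * ↑(s ^ (-α)))

lemma integrableOn_log_one_add_mul_rpow_neg (hα : 1 < α) {z : ℂ} (hz : z ∈ slitPlane) :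
    IntegrableOn (fun s : ℝ ↦ log (1 + z * ↑(s ^ (-α)))) (Ioi 0) := by
  rw [← Ioc_union_Ici_eq_Ioi zero_lt_one]
  refine IntegrableOn.union ?_ ?_
  · have hcont : ContinuousOn (fun s : ℝ ↦ log (↑(s ^ α) + z)) (Icc 0 1) := by
      refine ContinuousOn.clog ?_ ?_
      · have := Real.continuous_rpow_const (one_pos.trans hα).le
        fun_prop
      · intro s hs
        exact ofReal_add_mem_slitPlane hz (Real.rpow_nonneg hs.1 α)
    have hlog : IntegrableOn (fun s : ℝ ↦ (↑(α * Real.log s) : ℂ)) (Ioc 0 1) :=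
      (intervalIntegral.intervalIntegrable_log'.1.const_mul α).ofReal
    refine ((hcont.integrableOn_Icc.mono_set Ioc_subset_Icc_self).sub hlog).congr_fun
      (fun s hs ↦ ?_) measurableSet_Ioc
    exact (log_one_add_mul_rpow_neg hz hs.1).symm
  · have hcont : ContinuousOn (fun s : ℝ ↦ log (1 + z * ↑(s ^ (-α)))) (Ici 1) := by
      refine ContinuousOn.clog ?_ ?_
      · have : ContinuousOn (fun s : ℝ ↦ s ^ (-α)) (Ici 1) := fun s (hs : 1 ≤ s) ↦
          (Real.continuousAt_rpow_const s _ (.inl (by positivity))).continuousWithinAt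
        fun_prop
      · intro s hs
        exact one_add_mul_ofReal_mem_slitPlane hz (Real.rpow_nonneg (zero_le_one.trans hs) _)
    have hbigO : (fun s : ℝ ↦ log (1 + z * ↑(s ^ (-α)))) =O[atTop] fun s ↦ s ^ (-α) :=
      (isBigO_log_one_add_mul_ofReal z).comp_tendsto (tendsto_rpow_neg_atTop (one_pos.trans hα))
    exact (hcont.locallyIntegrableOn measurableSet_Ici).integrableOn_of_isBigO_atTop hbigO
      (integrableAtFilter_rpow_atTop_iff.2 (by linarith))

lemma differentiableOn_logIntegral (hα : 1 < α) :
    DifferentiableOn ℂ (logIntegral α) slitPlane := by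
  intro z hz
  obtain ⟨ε, hε, hball, C, hC⟩ := exists_ball_subset_slitPlane_norm_ofReal_div_le hz
  have hderiv : HasDerivAt (logIntegral α)
      (∫ s in Ioi (0 : ℝ), ↑(s ^ (-α)) / (1 + z * ↑(s ^ (-α)))) z := by
    refine (hasDerivAt_integral_of_dominated_loc_of_deriv_le
      (F' := fun (w : ℂ) (s : ℝ) ↦ ↑(s ^ (-α)) / (1 + w * ↑(s ^ (-α))))
      (bound := fun s ↦ C * (s ^ (-α) / (1 + s ^ (-α))))
      (Metric.ball_mem_nhds z hε) ?_ ?_ ?_ ?_ ?_ ?_).2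
    · exact .of_forall fun w ↦ Measurable.aestronglyMeasurable (by fun_prop)
    · exact integrableOn_log_one_add_mul_rpow_neg hα hz
    · exact Measurable.aestronglyMeasurable (by fun_prop)
    · filter_upwards [ae_restrict_mem measurableSet_Ioi] with s (hs : 0 < s) w hw
      exact hC w hw (s ^ (-α)) (by positivity)
    · exact (integrableOn_rpow_neg_div_one_add hα).const_mul C
    · filter_upwards [ae_restrict_mem measurableSet_Ioi] with s (hs : 0 < s) w hw
      exact hasDerivAt_log_one_add_mul_ofReal (hball hw) (by positivity)
  exact hderiv.differentiableAt.differentiableWithinAt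

lemma logIntegral_ofReal_mul (hα : α ≠ 0) {r : ℝ} (hr : 0 < r) (z : ℂ) :
    logIntegral α (r * z) = (r : ℂ) ^ (1 / α : ℂ) * logIntegral α z := by
  have hscale : 0 < r ^ (1 / α) := Real.rpow_pos_of_pos hr _
  have hsubst := integral_comp_mul_left_Ioi' (fun s : ℝ ↦ log (1 + r * z * ↑(s ^ (-α)))) 0 hscale
  rw [mul_zero, real_smul, ofReal_cpow hr.le] at hsubst
  rw [logIntegral, ← hsubst, logIntegral]
  push_cast
  congr 1
  refine setIntegral_congr_fun measurableSet_Ioi fun s (hs : 0 < s) ↦ ?_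
  have hpow : (r ^ (1 / α) * s) ^ (-α) = r⁻¹ * s ^ (-α) := by
    rw [Real.mul_rpow hscale.le hs.le, ← Real.rpow_mul hr.le, one_div, mul_neg,
      inv_mul_cancel₀ hα, Real.rpow_neg_one]
  have hr0 : (r : ℂ) ≠ 0 := ofReal_ne_zero.2 hr.ne'
  simp only [hpow, ofReal_mul, ofReal_inv]
  field_simp

lemma logIntegral_one : logIntegral α 1 = ∫ s in Ioi (0 : ℝ), Real.log (1 + s ^ (-α)) := by
  rw [logIntegral, ← integral_complex_ofReal]
  refine setIntegral_congr_fun measurableSet_Ioi fun s (hs : 0 < s) ↦ ?_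
  have : 0 ≤ 1 + s ^ (-α) := by positivity
  simp [ofReal_log this]

lemma logIntegral_eq_cpow_mul (hα : 1 < α) {z : ℂ} (hz : z ∈ slitPlane) :
    logIntegral α z = z ^ (1 / α : ℂ) * logIntegral α 1 := by
  refine eqOn_slitPlane_of_forall_ofReal_eq (g := fun z ↦ z ^ (1 / α : ℂ) * logIntegral α 1)
    (differentiableOn_logIntegral hα) ?_ ?_ hz
  · exact fun z hz ↦ ((differentiableAt_id.cpow_const hz).mul_const _).differentiableWithinAt
  · intro x hx
    simpa using logIntegral_ofReal_mul (one_pos.trans hα).ne' hx 1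

lemma integral_arg_one_add_mul_rpow_neg (hα : 1 < α) {z : ℂ} (hz : z ∈ slitPlane) :
    ∫ s in Ioi (0 : ℝ), arg (1 + z * ↑(s ^ (-α))) = (logIntegral α z).im := by
  rw [logIntegral, ← RCLike.im_to_complex,
    ← integral_im (integrableOn_log_one_add_mul_rpow_neg hα hz)]
  simp only [RCLike.im_to_complex, log_im]

end LogIntegral

section Drift

open Complex Set

lemma theta_rpow_one {α s : ℝ} (hs : 0 < s) (θ : ℝ) :
    Theta θ (s ^ α) 1 = arg (1 + exp (θ * I) * ↑(s ^ (-α))) := by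
  have hpos : 0 < s ^ α := Real.rpow_pos_of_pos hs α
  have hfactor : (↑(s ^ α) + ↑(1 : ℝ) * exp (θ * I) : ℂ) =
      ↑(s ^ α) * (1 + exp (θ * I) * ↑(s ^ (-α))) := by
    have : (↑(s ^ α) : ℂ) ≠ 0 := ofReal_ne_zero.2 hpos.ne'
    rw [Real.rpow_neg hs.le, ofReal_inv, ofReal_one]
    field_simp
  rw [Theta, hfactor, arg_real_mul _ hpos]

lemma drift_eq_integral_arg (θ α : ℝ) :
    Drift θ α = 1 / Real.pi * ∫ s in Ioi (0 : ℝ), arg (1 + exp (θ * I) * ↑(s ^ (-α))) := by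
  rw [Drift, setIntegral_congr_fun measurableSet_Ioi fun s hs ↦ theta_rpow_one hs θ]

lemma exp_ofReal_mul_I_mem_slitPlane {θ : ℝ} (hθ : θ ∈ Ioo (-Real.pi) Real.pi) :
    exp (θ * I) ∈ slitPlane := by
  rw [mem_slitPlane_iff_arg, exp_mul_I, arg_cos_add_sin_mul_I (Ioo_subset_Ioc_self hθ), ← exp_mul_I]
  exact ⟨hθ.2.ne, exp_ne_zero _⟩

lemma integral_arg_one_add_exp_mul_rpow_neg {α : ℝ} (hα : 1 < α) {θ : ℝ}
    (hθ : θ ∈ Ioo (-Real.pi) Real.pi) :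
    ∫ s in Ioi (0 : ℝ), arg (1 + exp (θ * I) * ↑(s ^ (-α))) =
      Real.sin (θ / α) * ∫ s in Ioi (0 : ℝ), Real.log (1 + s ^ (-α)) := by
  have hcpow : exp (θ * I) ^ (1 / α : ℂ) = exp (↑(θ / α) * I) := by
    rw [cpow_def_of_ne_zero (exp_ne_zero _), log_exp (by simpa using hθ.1) (by simpa using hθ.2.le)]
    push_cast
    ring_nf
  rw [integral_arg_one_add_mul_rpow_neg hα (exp_ofReal_mul_I_mem_slitPlane hθ),
    logIntegral_eq_cpow_mul hα (exp_ofReal_mul_I_mem_slitPlane hθ), hcpow, logIntegral_one,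
    im_mul_ofReal, exp_ofReal_mul_I_im]

lemma one_add_exp_mul_ofReal_ne_zero (θ : ℝ) {x : ℝ} (hx : 0 ≤ x) (hx1 : x ≠ 1) :
    1 + exp (θ * I) * x ≠ 0 := fun h ↦ by
  have hnorm := congrArg norm (eq_neg_of_add_eq_zero_right h)
  rw [norm_mul, norm_exp_ofReal_mul_I, one_mul, norm_real, Real.norm_of_nonneg hx, norm_neg,
    norm_one] at hnorm
  exact hx1 hnorm

lemma continuousOn_arg_one_add_exp_mul {x : ℝ} (hx : 0 ≤ x) (hx1 : x ≠ 1) :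
    ContinuousOn (fun θ : ℝ ↦ arg (1 + exp (θ * I) * x)) (Icc 0 Real.pi) := by
  refine continuousOn_arg_im_nonneg.comp (by fun_prop) fun θ hθ ↦
    ⟨?_, one_add_exp_mul_ofReal_ne_zero θ hx hx1⟩
  rw [add_im, one_im, zero_add, im_mul_ofReal, exp_ofReal_mul_I_im]
  exact mul_nonneg (Real.sin_nonneg_of_mem_Icc hθ) hx

lemma continuousOn_integral_arg_one_add_exp_mul_rpow_neg {α : ℝ} (hα : 1 < α) :
    ContinuousOn (fun θ : ℝ ↦ ∫ s in Ioi (0 : ℝ), arg (1 + exp (θ * I) * ↑(s ^ (-α))))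
      (Icc 0 Real.pi) := by
  refine continuousOn_of_dominated
    (bound := fun s ↦ 3 * Real.pi * (s ^ (-α) / (1 + s ^ (-α)))) ?_ ?_ ?_ ?_
  · exact fun θ _ ↦ Measurable.aestronglyMeasurable (by fun_prop)
  · intro θ _
    filter_upwards [ae_restrict_mem measurableSet_Ioi] with s (hs : 0 < s)
    have hnorm : ‖exp (θ * I) * ↑(s ^ (-α))‖ = s ^ (-α) := by
      rw [norm_mul, norm_exp_ofReal_mul_I, one_mul, norm_real,
        Real.norm_of_nonneg (by positivity)]
    simpa only [hnorm, Real.norm_eq_abs] using abs_arg_one_add_le (exp (θ * I) * ↑(s ^ (-α)))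
  · exact (integrableOn_rpow_neg_div_one_add hα).const_mul _
  · filter_upwards [ae_restrict_mem measurableSet_Ioi, Measure.ae_ne _ (1 : ℝ)]
      with s (hs : 0 < s) hs1
    have hne : s ^ (-α) ≠ 1 := by
      simpa using (Real.rpow_left_inj hs.le zero_le_one (by linarith : -α ≠ 0)).not.2 hs1
    exact continuousOn_arg_one_add_exp_mul (by positivity) hne

lemma integral_arg_one_add_exp_mul_rpow_neg_of_mem_Icc {α : ℝ} (hα : 1 < α) {θ : ℝ}
    (hθ : θ ∈ Icc 0 Real.pi) :
    ∫ s in Ioi (0 : ℝ), arg (1 + exp (θ * I) * ↑(s ^ (-α))) =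
      Real.sin (θ / α) * ∫ s in Ioi (0 : ℝ), Real.log (1 + s ^ (-α)) := by
  have hEqOn : EqOn (fun θ : ℝ ↦ ∫ s in Ioi (0 : ℝ), arg (1 + exp (θ * I) * ↑(s ^ (-α))))
      (fun θ ↦ Real.sin (θ / α) * ∫ s in Ioi (0 : ℝ), Real.log (1 + s ^ (-α)))
      (Ioo 0 Real.pi) := fun θ hθ ↦
    integral_arg_one_add_exp_mul_rpow_neg hα ⟨(neg_neg_of_pos Real.pi_pos).trans hθ.1, hθ.2⟩
  exact hEqOn.of_subset_closure (continuousOn_integral_arg_one_add_exp_mul_rpow_neg hα)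
    (by fun_prop) Ioo_subset_Icc_self (closure_Ioo Real.pi_ne_zero.symm).ge hθ

lemma integral_arg_one_sub_rpow_neg {α : ℝ} (hα : 0 < α) :
    ∫ s in Ioi (0 : ℝ), arg (1 - ↑(s ^ (-α))) = Real.pi := by
  have harg : EqOn (fun s : ℝ ↦ arg (1 - ↑(s ^ (-α)))) ((Iio 1).indicator fun _ ↦ Real.pi)
      (Ioi 0) := by
    intro s (hs : 0 < s)
    have hcast : (1 - ↑(s ^ (-α)) : ℂ) = ↑(1 - s ^ (-α)) := by push_cast; rfl
    rcases lt_or_ge s 1 with hs1 | hs1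
    · have : 1 < s ^ (-α) := Real.one_lt_rpow_of_pos_of_lt_one_of_neg hs hs1 (neg_neg_of_pos hα)
      simp only [hcast]
      rw [arg_ofReal_of_neg (by linarith), indicator_of_mem (mem_Iio.2 hs1)]
    · have : s ^ (-α) ≤ 1 := Real.rpow_le_one_of_one_le_of_nonpos hs1 (neg_nonpos.2 hα.le)
      simp only [hcast]
      rw [arg_ofReal_of_nonneg (by linarith), indicator_of_notMem (by simpa using hs1)]
  rw [setIntegral_congr_fun measurableSet_Ioi harg, setIntegral_indicator measurableSet_Iio,
    Ioi_inter_Iio, setIntegral_const]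
  simp

lemma integral_log_one_add_rpow_neg {α : ℝ} (hα : 1 < α) :
    ∫ s in Ioi (0 : ℝ), Real.log (1 + s ^ (-α)) = Real.pi / Real.sin (Real.pi / α) := by
  have hpi := integral_arg_one_add_exp_mul_rpow_neg_of_mem_Icc hα (right_mem_Icc.2 Real.pi_pos.le)
  simp only [exp_pi_mul_I, neg_one_mul, ← sub_eq_add_neg,
    integral_arg_one_sub_rpow_neg (one_pos.trans hα)] at hpi
  rw [eq_div_iff (sin_pi_div_pos hα).ne', mul_comm, ← hpi]

lemma drift_eq_sin_div_sin {θ α : ℝ} (hθ : θ ∈ Icc 0 Real.pi) (hα : 1 < α) :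
    Drift θ α = Real.sin (θ / α) / Real.sin (Real.pi / α) := by
  rw [drift_eq_integral_arg, integral_arg_one_add_exp_mul_rpow_neg_of_mem_Icc hα hθ,
    integral_log_one_add_rpow_neg hα]
  field_simp

lemma drift_one_add_div_pi {θ : ℝ} (hθ : θ ∈ Ioc 0 Real.pi) :
    Drift θ (1 + θ / Real.pi) = 1 := by
  have hpos : 0 < θ / Real.pi := div_pos hθ.1 Real.pi_pos
  have hα : 1 < 1 + θ / Real.pi := by linarith
  have hsupp : θ / (1 + θ / Real.pi) = Real.pi - Real.pi / (1 + θ / Real.pi) := by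
    rw [eq_sub_iff_add_eq, ← add_div, div_eq_iff (one_pos.trans hα).ne', mul_one_add,
      mul_div_cancel₀ θ Real.pi_ne_zero, add_comm]
  rw [drift_eq_sin_div_sin (Ioc_subset_Icc_self hθ) hα, hsupp, Real.sin_pi_sub,
    div_self (sin_pi_div_pos hα).ne']

lemma strictAntiOn_drift {θ : ℝ} (hθ : θ ∈ Ioo 0 Real.pi) : StrictAntiOn (Drift θ) (Ioi 1) := by
  have hanti := strictAntiOn_sin_div_div_sin_div hθ.1 hθ.2
  rw [div_self Real.pi_ne_zero] at hanti
  exact hanti.congr fun α hα ↦ (drift_eq_sin_div_sin (Ioo_subset_Icc_self hθ) hα).symm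

lemma tendsto_drift_nhdsGT_one {θ : ℝ} (hθ : θ ∈ Ioo 0 Real.pi) :
    Tendsto (Drift θ) (𝓝[>] 1) atTop := by
  refine (tendsto_sin_div_div_sin_pi_div_nhdsGT_one
    (Real.sin_pos_of_mem_Ioo hθ)).congr' ?_
  filter_upwards [self_mem_nhdsWithin] with α hα
  exact (drift_eq_sin_div_sin (Ioo_subset_Icc_self hθ) hα).symm

lemma tendsto_drift_atTop {θ : ℝ} (hθ : θ ∈ Icc 0 Real.pi) :
    Tendsto (Drift θ) atTop (𝓝 (θ / Real.pi)) := by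
  refine (tendsto_sin_div_div_sin_div_atTop θ Real.pi_ne_zero).congr' ?_
  filter_upwards [eventually_gt_atTop 1] with α hα
  exact (drift_eq_sin_div_sin hθ hα).symm

end Drift

theorem stmt_12 (θ : ℝ) (hθ : 0 < θ) (hθπ : θ < Real.pi) :
    (∀ α : ℝ, 1 < α → Drift θ α = Real.sin (θ / α) / Real.sin (Real.pi / α)) ∧
    StrictAntiOn (Drift θ) (Set.Ioi 1) ∧
    Tendsto (Drift θ) (nhdsWithin 1 (Set.Ioi 1)) atTop ∧
    Tendsto (Drift θ) atTop (nhds (θ / Real.pi)) ∧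
    (∃! α : ℝ, 1 < α ∧ Drift θ α = 1) ∧
    (∀ α : ℝ, 1 < α → (Drift θ α = 1 ↔ α = 1 + θ / Real.pi)) := by
  have hmem : θ ∈ Set.Ioo 0 Real.pi := ⟨hθ, hθπ⟩
  have hanti : StrictAntiOn (Drift θ) (Set.Ioi 1) := strictAntiOn_drift hmem
  have hα : 1 < 1 + θ / Real.pi := lt_add_of_pos_right 1 (div_pos hθ Real.pi_pos)
  have hone : Drift θ (1 + θ / Real.pi) = 1 := drift_one_add_div_pi ⟨hθ, hθπ.le⟩
  have hiff (α : ℝ) (h : 1 < α) : Drift θ α = 1 ↔ α = 1 + θ / Real.pi := by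
    simpa only [hone] using hanti.injOn.eq_iff h hα
  refine ⟨fun α h ↦ drift_eq_sin_div_sin (Set.Ioo_subset_Icc_self hmem) h, hanti,
    tendsto_drift_nhdsGT_one hmem, tendsto_drift_atTop (Set.Ioo_subset_Icc_self hmem),
    ⟨1 + θ / Real.pi, ⟨hα, hone⟩, fun α h ↦ (hiff α h.1).1 h.2⟩, hiff⟩
end

section
/- Suppose there is K > 0 with Q_j ≤ j + K for all j ≥ 1. Then there exists A_0 > 0 such that for every A ≥ A_0 the sequence X̄ defined by X̄_k := (k + A)^{α_θ} satisfies φ_j(X̄, X̄) ≥ Q_j for all j ≥ 1. -/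
open Filter Asymptotics MeasureTheory
open scoped ENNReal Topology

/-!
The identity behind the theorem is `Drift θ α = sin (θ / α) / sin (π / α)` for `1 < α`, which at
`α = 1 + θ / π` equals `1` because there `θ / α + π / α = π`. The function
`e^w log (1 + e^{-αw})` is holomorphic and exponentially decaying in the strip `|Im (αw)| < π`, so
its integral over the real line can be moved to the line `Im w = -θ / α`. Comparing imaginary parts
shows that `∫ Θ(s^α, 1) ds` is `sin (θ / α)` times `∫ log (1 + s^{-α}) ds`. The second integral
does not depend on `θ`, and letting `θ → π⁻`, where `Θ(s^α, 1)` tends to `π` for `s < 1` and to `0`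
for `s > 1`, shows that it is `π / sin (π / α)`.

Since `Θ(x^α, E^α)` decreases in `x` and is at most `θ`, its sum over `x = 1 + A, 2 + A, …` is at
least `π E · Drift θ α - θ (1 + A)`. With `E = j + A` and unit drift this gives
`φ_j ≥ j + A - (θ / π)(1 + A)`; as `θ < π`, the surplus over `j` grows linearly in `A` and
eventually exceeds `K`.
-/

section

open Set Real
open Complex (I slitPlane)
open scoped Interval

section Strip

variable {E : Type*} [NormedAddCommGroup E] {f : ℂ → E} {g : ℝ → ℝ} {a b y : ℝ}

lemma integrable_horizontal_line (hf : ContinuousOn f (Complex.im ⁻¹' [[a, b]]))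
    (hfg : ∀ᶠ x : ℝ in cocompact ℝ, ∀ y ∈ [[a, b]], ‖f (x + y * I)‖ ≤ g x)
    (hg : Integrable g) (hy : y ∈ [[a, b]]) :
    Integrable fun x : ℝ ↦ f (x + y * I) := by
  have hcont : Continuous fun x : ℝ ↦ f (x + y * I) :=
    hf.comp_continuous (by fun_prop) fun x ↦ by simpa using hy
  have hO : (fun x : ℝ ↦ f (x + y * I)) =O[cocompact ℝ] g :=
    .of_norm_eventuallyLE <| hfg.mono fun x hx ↦ hx y hy
  exact hcont.locallyIntegrable.integrable_of_isBigO_cocompact hO (hg.integrableAtFilter _)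

variable [NormedSpace ℂ E]

lemma tendsto_integral_vertical_segment
    (hfg : ∀ᶠ x : ℝ in cocompact ℝ, ∀ y ∈ [[a, b]], ‖f (x + y * I)‖ ≤ g x)
    (hg : Tendsto g (cocompact ℝ) (𝓝 0)) :
    Tendsto (fun x : ℝ ↦ ∫ y in a..b, f (x + y * I)) (cocompact ℝ) (𝓝 0) := by
  have hbound : Tendsto (fun x ↦ g x * |b - a|) (cocompact ℝ) (𝓝 0) := by
    simpa using hg.mul_const |b - a|
  refine squeeze_zero_norm' (hfg.mono fun x hx ↦ ?_) hbound
  exact intervalIntegral.norm_integral_le_of_norm_le_const fun y hy ↦ hx y (uIoc_subset_uIcc hy)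

theorem integral_horizontal_line_eq (hf : DifferentiableOn ℂ f (Complex.im ⁻¹' [[a, b]]))
    (hfg : ∀ᶠ x : ℝ in cocompact ℝ, ∀ y ∈ [[a, b]], ‖f (x + y * I)‖ ≤ g x)
    (hg : Integrable g) (hg₀ : Tendsto g (cocompact ℝ) (𝓝 0)) :
    ∫ x : ℝ, f (x + a * I) = ∫ x : ℝ, f (x + b * I) := by
  have hline {y : ℝ} (hy : y ∈ [[a, b]]) :
      Tendsto (fun T : ℝ ↦ ∫ x in (-T)..T, f (x + y * I)) atTop (𝓝 (∫ x : ℝ, f (x + y * I))) :=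
    intervalIntegral_tendsto_integral (integrable_horizontal_line hf.continuousOn hfg hg hy)
      tendsto_neg_atTop_atBot tendsto_id
  have hright := (tendsto_integral_vertical_segment hfg hg₀).mono_left atTop_le_cocompact
  have hleft := ((tendsto_integral_vertical_segment hfg hg₀).mono_left atBot_le_cocompact).comp
    tendsto_neg_atTop_atBot
  have hrect (T : ℝ) : (∫ x in (-T)..T, f (x + a * I)) - (∫ x in (-T)..T, f (x + b * I)) +
      I • (∫ y in a..b, f (T + y * I)) - I • (∫ y in a..b, f ((-T : ℝ) + y * I)) = 0 :=
    Complex.integral_boundary_rect_eq_zero_of_differentiableOn f ⟨-T, a⟩ ⟨T, b⟩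
      (hf.mono fun _ hw ↦ hw.2)
  have hlim := (((hline left_mem_uIcc).sub (hline right_mem_uIcc)).add
    (hright.const_smul I)).sub (hleft.const_smul I)
  simp only [Function.comp_def, hrect, smul_zero, add_zero, sub_zero] at hlim
  exact (sub_eq_zero.1 (tendsto_nhds_unique hlim tendsto_const_nhds))

end Strip

section ExpDecay

variable {c : ℝ}

lemma integrable_exp_neg_mul_abs (hc : 0 < c) : Integrable fun x : ℝ ↦ exp (-c * |x|) := by
  rw [← integrableOn_univ, ← Iic_union_Ioi (a := (0 : ℝ)), integrableOn_union]
  constructor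
  · refine (integrableOn_exp_mul_Iic hc 0).congr_fun (fun x hx ↦ ?_) measurableSet_Iic
    simp only [abs_of_nonpos (mem_Iic.1 hx), neg_mul_neg]
  · refine (integrableOn_exp_mul_Ioi (neg_lt_zero.2 hc) 0).congr_fun (fun x hx ↦ ?_)
      measurableSet_Ioi
    simp only [abs_of_pos (mem_Ioi.1 hx)]

lemma tendsto_exp_neg_mul_abs_cocompact (hc : 0 < c) :
    Tendsto (fun x : ℝ ↦ exp (-c * |x|)) (cocompact ℝ) (𝓝 0) :=
  tendsto_exp_atBot.comp <|
    (tendsto_norm_cocompact_atTop (E := ℝ)).const_mul_atTop_of_neg (neg_lt_zero.2 hc)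

end ExpDecay

section ExpSubstitution

variable {E : Type*} [NormedAddCommGroup E] [NormedSpace ℝ E] (g : ℝ → E)

lemma integral_exp_smul_comp_exp : ∫ x, exp x • g (exp x) = ∫ y in Ioi 0, g y := by
  rw [← range_exp, ← image_univ, integral_image_eq_integral_abs_deriv_smul MeasurableSet.univ
    (fun x _ ↦ (hasDerivAt_exp x).hasDerivWithinAt) exp_injective.injOn]
  simp only [abs_exp, setIntegral_univ]

lemma integrable_exp_smul_comp_exp_iff :
    Integrable (fun x ↦ exp x • g (exp x)) ↔ IntegrableOn g (Ioi 0) := by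
  rw [← range_exp, ← image_univ, integrableOn_image_iff_integrableOn_abs_deriv_smul
    MeasurableSet.univ (fun x _ ↦ (hasDerivAt_exp x).hasDerivWithinAt) exp_injective.injOn]
  simp only [abs_exp, integrableOn_univ]

end ExpSubstitution

section LogBounds

variable {z w : ℂ}

lemma one_add_exp_mem_slitPlane (hw : |w.im| < π) : 1 + Complex.exp w ∈ slitPlane := by
  rw [abs_lt] at hw
  rw [Complex.mem_slitPlane_iff, Complex.add_re, Complex.add_im, Complex.exp_re, Complex.exp_im]
  rcases eq_or_ne w.im 0 with him | him
  · left
    simp only [him, cos_zero, mul_one, Complex.one_re]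
    positivity
  · right
    simpa using (sin_eq_zero_iff_of_lt_of_lt hw.1 hw.2).not.2 him

lemma norm_log_one_add_le_log_norm (hz : 2 ≤ ‖z‖) :
    ‖Complex.log (1 + z)‖ ≤ log ‖z‖ + 1 + π := by
  have hlower : 1 ≤ ‖1 + z‖ := by
    have := norm_sub_norm_le z (-1)
    rw [norm_neg, norm_one, sub_neg_eq_add, add_comm z] at this
    linarith
  have hupper : ‖1 + z‖ ≤ ‖z‖ * exp 1 := by
    have htriangle := norm_add_le 1 z
    rw [norm_one] at htriangle
    nlinarith [add_one_le_exp 1]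
  have hre : |(Complex.log (1 + z)).re| ≤ log ‖z‖ + 1 := by
    rw [Complex.log_re, abs_of_nonneg (log_nonneg hlower)]
    calc log ‖1 + z‖ ≤ log (‖z‖ * exp 1) := log_le_log (by linarith) hupper
      _ = log ‖z‖ + 1 := by rw [log_mul (by linarith) (exp_ne_zero 1), log_exp]
  have him : |(Complex.log (1 + z)).im| ≤ π := by
    rw [Complex.log_im]
    exact Complex.abs_arg_le_pi _
  exact (Complex.norm_le_abs_re_add_abs_im _).trans (add_le_add hre him)

lemma abs_arg_one_add_le_s13 (z : ℂ) : |Complex.arg (1 + z)| ≤ 2 * π * ‖z‖ := by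
  rcases le_total ‖z‖ (1 / 2) with hz | hz
  · calc |Complex.arg (1 + z)| = |(Complex.log (1 + z)).im| := by rw [Complex.log_im]
      _ ≤ ‖Complex.log (1 + z)‖ := Complex.abs_im_le_norm _
      _ ≤ 3 / 2 * ‖z‖ := Complex.norm_log_one_add_half_le_self hz
      _ ≤ 2 * π * ‖z‖ := by gcongr; linarith [pi_gt_three]
  · exact (Complex.abs_arg_le_pi _).trans (by nlinarith [pi_pos])

end LogBounds

section LogKernel

/-- The holomorphic function `e^w log (1 + e^{-αw})`. Its integral along the real line is
`∫_0^∞ log (1 + s^{-α}) ds`, and along the line `Im w = -θ / α` the imaginary part of the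
logarithm becomes `Θ(s^α, 1)`, in both cases with `s = e^{Re w}`. -/
noncomputable def logKernel (α : ℝ) (w : ℂ) : ℂ :=
  Complex.exp w * Complex.log (1 + Complex.exp (-α * w))

variable {α : ℝ} {w : ℂ}

lemma differentiableAt_logKernel (hw : |α * w.im| < π) : DifferentiableAt ℂ (logKernel α) w := by
  have hmem : 1 + Complex.exp (-α * w) ∈ slitPlane :=
    one_add_exp_mem_slitPlane (by simpa using hw)
  have hlog : DifferentiableAt ℂ (fun w ↦ Complex.log (1 + Complex.exp (-α * w))) w :=
    .clog (by fun_prop) hmem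
  exact Complex.differentiableAt_exp.mul hlog

lemma norm_logKernel (α : ℝ) (w : ℂ) :
    ‖logKernel α w‖ = exp w.re * ‖Complex.log (1 + Complex.exp (-α * w))‖ := by
  rw [logKernel, norm_mul, Complex.norm_exp]

lemma norm_exp_neg_mul (α : ℝ) (w : ℂ) : ‖Complex.exp (-α * w)‖ = exp (-(α * w.re)) := by
  simp [Complex.norm_exp]

lemma norm_logKernel_le_of_one_le (hw : 1 ≤ α * w.re) :
    ‖logKernel α w‖ ≤ 3 / 2 * exp (-(α - 1) * w.re) := by
  have hsmall : ‖Complex.exp (-α * w)‖ ≤ 1 / 2 := by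
    rw [norm_exp_neg_mul, exp_neg, one_div]
    exact inv_anti₀ two_pos (by linarith [add_one_le_exp (α * w.re)])
  calc ‖logKernel α w‖ ≤ exp w.re * (3 / 2 * exp (-(α * w.re))) := by
        rw [norm_logKernel, ← norm_exp_neg_mul]
        gcongr
        exact Complex.norm_log_one_add_half_le_self hsmall
    _ = 3 / 2 * exp (-(α - 1) * w.re) := by
        rw [mul_left_comm, ← exp_add]
        ring_nf

lemma norm_logKernel_le_of_le_neg_one (hα : 0 < α) (hw : α * w.re ≤ -1) :
    ‖logKernel α w‖ ≤ (α ^ 2 + 1 + π) * exp ((1 - α⁻¹) * w.re) := by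
  have hlarge : 2 ≤ ‖Complex.exp (-α * w)‖ := by
    rw [norm_exp_neg_mul]
    linarith [add_one_le_exp (-(α * w.re))]
  have hlog : -(α * w.re) + 1 + π ≤ (α ^ 2 + 1 + π) * exp (-(α⁻¹ * w.re)) := by
    have hlinear : -(α * w.re) = α ^ 2 * -(α⁻¹ * w.re) := by field_simp
    have hre : w.re ≤ 0 := by nlinarith
    have hone : 1 ≤ exp (-(α⁻¹ * w.re)) :=
      one_le_exp (neg_nonneg.2 (mul_nonpos_of_nonneg_of_nonpos (by positivity) hre))
    have hle := mul_le_mul_of_nonneg_left (add_one_le_exp (-(α⁻¹ * w.re))) (sq_nonneg α)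
    rw [hlinear]
    nlinarith [pi_pos, sq_nonneg α]
  calc ‖logKernel α w‖ ≤ exp w.re * (-(α * w.re) + 1 + π) := by
        rw [norm_logKernel]
        gcongr
        simpa only [norm_exp_neg_mul, log_exp] using norm_log_one_add_le_log_norm hlarge
    _ ≤ exp w.re * ((α ^ 2 + 1 + π) * exp (-(α⁻¹ * w.re))) := by gcongr
    _ = (α ^ 2 + 1 + π) * exp ((1 - α⁻¹) * w.re) := by
        rw [mul_left_comm, ← exp_add]
        ring_nf

lemma one_sub_inv_le_sub_one (hα : 0 < α) : 1 - α⁻¹ ≤ α - 1 :=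
  (one_sub_inv_le_log_of_pos hα).trans (log_le_sub_one_of_pos hα)

lemma norm_logKernel_le (hα : 1 < α) (hw : 1 ≤ α * |w.re|) :
    ‖logKernel α w‖ ≤ (α ^ 2 + 1 + π) * exp (-(1 - α⁻¹) * |w.re|) := by
  rcases le_total 0 w.re with hre | hre
  · rw [abs_of_nonneg hre] at hw ⊢
    have hα₀ : 0 < α := by linarith
    have hconst : 3 / 2 ≤ α ^ 2 + 1 + π := by nlinarith [pi_gt_three]
    calc ‖logKernel α w‖ ≤ 3 / 2 * exp (-(α - 1) * w.re) := norm_logKernel_le_of_one_le hw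
      _ ≤ (α ^ 2 + 1 + π) * exp (-(1 - α⁻¹) * w.re) := by
        gcongr ?_ * exp (-?_ * _)
        exact one_sub_inv_le_sub_one hα₀
  · rw [abs_of_nonpos hre] at hw ⊢
    rw [neg_mul_neg]
    exact norm_logKernel_le_of_le_neg_one (by linarith) (by linarith)

section Line

variable (hα : 1 < α)
include hα

lemma one_sub_inv_pos_of_one_lt : 0 < 1 - α⁻¹ :=
  sub_pos.2 (inv_lt_one_of_one_lt₀ hα)

lemma eventually_norm_logKernel_le :
    ∀ᶠ x : ℝ in cocompact ℝ, ∀ y : ℝ,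
      ‖logKernel α (x + y * I)‖ ≤ (α ^ 2 + 1 + π) * exp (-(1 - α⁻¹) * |x|) := by
  have hlarge : ∀ᶠ x : ℝ in cocompact ℝ, 1 ≤ α * |x| :=
    ((tendsto_norm_cocompact_atTop (E := ℝ)).const_mul_atTop (by linarith)).eventually_ge_atTop 1
  filter_upwards [hlarge] with x hx y
  simpa using norm_logKernel_le (w := x + y * I) hα (by simpa using hx)

lemma integral_logKernel_line {y : ℝ} (hy : |α * y| < π) :
    ∫ u : ℝ, logKernel α (u + y * I) = ∫ u : ℝ, logKernel α u := by
  have hdiff : DifferentiableOn ℂ (logKernel α) (Complex.im ⁻¹' [[y, 0]]) := fun w hw ↦ by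
    have hle : |w.im| ≤ |y| := by simpa using abs_sub_right_of_mem_uIcc hw
    refine (differentiableAt_logKernel (lt_of_le_of_lt ?_ hy)).differentiableWithinAt
    simp only [abs_mul]
    gcongr
  have hdecay := tendsto_exp_neg_mul_abs_cocompact (one_sub_inv_pos_of_one_lt hα)
  simpa using integral_horizontal_line_eq hdiff
    ((eventually_norm_logKernel_le hα).mono fun x hx y _ ↦ hx y)
    ((integrable_exp_neg_mul_abs (one_sub_inv_pos_of_one_lt hα)).const_mul _)
    (by simpa using hdecay.const_mul (α ^ 2 + 1 + π))

lemma integrable_logKernel_line {y : ℝ} (hy : |α * y| < π) :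
    Integrable fun u : ℝ ↦ logKernel α (u + y * I) :=
  integrable_horizontal_line (a := y) (b := y)
    (fun w hw ↦ (differentiableAt_logKernel (by simp_all)).continuousAt.continuousWithinAt)
    ((eventually_norm_logKernel_le hα).mono fun x hx y _ ↦ hx y)
    ((integrable_exp_neg_mul_abs (one_sub_inv_pos_of_one_lt hα)).const_mul _) left_mem_uIcc

end Line

end LogKernel

section Theta

variable {θ a b c E : ℝ}

lemma Theta_mul_mul (hc : 0 < c) : Theta θ (c * a) (c * b) = Theta θ a b := by
  rw [Theta, Theta, ← Complex.arg_real_mul (a + b * Complex.exp (θ * I)) hc]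
  push_cast
  ring_nf

lemma Theta_eq_arg_one_add (ha : 0 < a) :
    Theta θ a E = Complex.arg (1 + (E / a : ℝ) * Complex.exp (θ * I)) := by
  have h := Theta_mul_mul (θ := θ) (a := 1) (b := E / a) ha
  rw [mul_one, mul_div_cancel₀ _ ha.ne'] at h
  rw [h, Theta, Complex.ofReal_one]

lemma abs_Theta_le (ha : 0 < a) (hE : 0 ≤ E) : |Theta θ a E| ≤ 2 * π * (E / a) := by
  have h := abs_arg_one_add_le_s13 ((E / a : ℝ) * Complex.exp (θ * I))
  rwa [← Theta_eq_arg_one_add ha, norm_mul, Complex.norm_exp_ofReal_mul_I, mul_one,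
    Complex.norm_real, norm_of_nonneg (by positivity)] at h

lemma Theta_nonneg (hθ : 0 ≤ θ) (hθπ : θ ≤ π) (hE : 0 ≤ E) : 0 ≤ Theta θ a E := by
  rw [Theta, Complex.arg_nonneg_iff]
  simpa using mul_nonneg hE (sin_nonneg_of_nonneg_of_le_pi hθ hθπ)

lemma Theta_zero_left (hθ : θ ∈ Ioc (-π) π) (hE : 0 < E) : Theta θ 0 E = θ := by
  rw [Theta, Complex.ofReal_zero, zero_add, Complex.arg_real_mul _ hE, Complex.arg_exp_mul_I,
    (toIocMod_eq_self two_pi_pos).2 (by convert hθ using 1; ring_nf)]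

lemma antitone_arg_ofReal_add {z : ℂ} (hz : 0 < z.im) :
    Antitone fun a : ℝ ↦ Complex.arg (a + z) := by
  have hderiv (a : ℝ) : HasDerivAt (fun a : ℝ ↦ Complex.arg (a + z)) ((a + z)⁻¹).im a := by
    have hmem : (a : ℂ) + z ∈ slitPlane := .inr (by simpa using hz.ne')
    have hadd : HasDerivAt (fun a : ℝ ↦ (a : ℂ) + z) 1 a :=
      (Complex.ofRealCLM.hasDerivAt (x := a)).add_const z
    simpa [Function.comp_def, Complex.log_im] using
      Complex.imCLM.hasFDerivAt.comp_hasDerivAt a (hadd.clog_real hmem)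
  refine antitone_of_deriv_nonpos (fun a ↦ (hderiv a).differentiableAt) fun a ↦ ?_
  rw [(hderiv a).deriv, Complex.inv_im, Complex.add_im, Complex.ofReal_im, zero_add]
  exact div_nonpos_of_nonpos_of_nonneg (neg_nonpos.2 hz.le) (Complex.normSq_nonneg _)

lemma antitone_Theta (hθ : 0 < θ) (hθπ : θ < π) (hE : 0 < E) : Antitone (Theta θ · E) :=
  antitone_arg_ofReal_add <| by
    simpa using mul_pos hE (sin_pos_of_pos_of_lt_pi hθ hθπ)

lemma Theta_le (hθ : 0 < θ) (hθπ : θ < π) (hE : 0 < E) (ha : 0 ≤ a) : Theta θ a E ≤ θ :=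
  (antitone_Theta hθ hθπ hE ha).trans_eq (Theta_zero_left ⟨by linarith, hθπ.le⟩ hE)

lemma tendsto_Theta_nhdsLT_pi_of_lt (hE : 0 ≤ E) (ha : a < E) :
    Tendsto (Theta · a E) (𝓝[<] π) (𝓝 π) := by
  refine (Complex.tendsto_arg_nhdsWithin_im_nonneg_of_re_neg_of_im_zero
    (z := a + E * Complex.exp (π * I)) (by simpa using ha) (by simp)).comp
    (tendsto_nhdsWithin_iff.2 ⟨?_, ?_⟩)
  · exact Continuous.continuousWithinAt (by fun_prop)
  · filter_upwards [Ioo_mem_nhdsLT pi_pos] with ψ hψ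
    simpa using mul_nonneg hE (sin_nonneg_of_nonneg_of_le_pi hψ.1.le hψ.2.le)

lemma tendsto_Theta_nhds_pi_of_gt (ha : E < a) : Tendsto (Theta · a E) (𝓝 π) (𝓝 0) := by
  have hpi : Theta π a E = 0 := by
    have hreal : (a : ℂ) + E * Complex.exp (π * I) = (a - E : ℝ) := by
      rw [Complex.exp_pi_mul_I]; push_cast; ring
    rw [Theta, hreal, Complex.arg_ofReal_of_nonneg (by linarith)]
  have hcont : ContinuousAt (Theta · a E) π :=
    (Complex.continuousAt_arg (.inl (by simpa using ha))).comp (by fun_prop)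
  simpa only [hpi] using hcont.tendsto

end Theta

section ThetaIntegral

variable {α θ : ℝ}

lemma exp_mul_logKernel_line (hα : α ≠ 0) (u : ℝ) :
    (Complex.exp ((θ / α : ℝ) * I) * logKernel α (u + (-(θ / α) : ℝ) * I)) =
      exp u * Complex.log (1 + Complex.exp (-(α * u) + θ * I)) := by
  have hexp : Complex.exp ((θ / α : ℝ) * I) * Complex.exp (u + (-(θ / α) : ℝ) * I) = exp u := by
    rw [← Complex.exp_add, Complex.ofReal_exp]
    push_cast
    ring_nf
  have harg : -α * (u + (-(θ / α) : ℝ) * I) = -(α * u) + θ * I := by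
    have : (α : ℂ) ≠ 0 := mod_cast hα
    push_cast
    field_simp
    ring
  rw [logKernel, ← mul_assoc, hexp, harg]

lemma exp_mul_Theta_exp (hα : α ≠ 0) (u : ℝ) :
    exp u * Theta θ (exp (α * u)) 1 =
      (Complex.exp ((θ / α : ℝ) * I) * logKernel α (u + (-(θ / α) : ℝ) * I)).im := by
  rw [exp_mul_logKernel_line hα, Complex.im_ofReal_mul, Complex.log_im,
    Theta_eq_arg_one_add (exp_pos _), one_div, ← exp_neg, Complex.exp_add]
  push_cast
  rfl

lemma logKernel_ofReal (α u : ℝ) :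
    logKernel α u = (exp u * log (1 + exp (-(α * u))) : ℝ) := by
  rw [logKernel, Complex.ofReal_mul, Complex.ofReal_log (by positivity)]
  push_cast
  rw [neg_mul]

section

variable (hα : 1 < α) (hθ : |θ| < π)
include hα hθ

lemma integrable_exp_mul_Theta_exp :
    Integrable fun u : ℝ ↦ exp u * Theta θ (exp (α * u)) 1 := by
  have hα₀ : α ≠ 0 := by linarith
  simp only [exp_mul_Theta_exp hα₀]
  refine ((integrable_logKernel_line hα ?_).const_mul _).im
  rwa [mul_neg, abs_neg, mul_div_cancel₀ _ hα₀]

lemma integral_exp_mul_Theta_exp_eq_sin_mul :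
    ∫ u : ℝ, exp u * Theta θ (exp (α * u)) 1 =
      sin (θ / α) * ∫ u : ℝ, exp u * log (1 + exp (-(α * u))) := by
  have hα₀ : α ≠ 0 := by linarith
  have hline : |α * -(θ / α)| < π := by rwa [mul_neg, abs_neg, mul_div_cancel₀ _ hα₀]
  calc ∫ u : ℝ, exp u * Theta θ (exp (α * u)) 1
      = (∫ u : ℝ, Complex.exp ((θ / α : ℝ) * I) * logKernel α (u + (-(θ / α) : ℝ) * I)).im := by
        simp only [exp_mul_Theta_exp hα₀]
        exact integral_im ((integrable_logKernel_line hα hline).const_mul _)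
    _ = (Complex.exp ((θ / α : ℝ) * I) *
          (∫ u : ℝ, exp u * log (1 + exp (-(α * u))) : ℝ)).im := by
        rw [integral_const_mul, integral_logKernel_line hα hline, ← integral_complex_ofReal]
        simp only [logKernel_ofReal]
    _ = sin (θ / α) * ∫ u : ℝ, exp u * log (1 + exp (-(α * u))) := by
        rw [Complex.im_mul_ofReal, Complex.exp_ofReal_mul_I_im]

end

lemma abs_exp_mul_Theta_exp_le (hα : 1 < α) (θ u : ℝ) :
    |exp u * Theta θ (exp (α * u)) 1| ≤ 2 * π * exp (-(1 - α⁻¹) * |u|) := by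
  have hα₀ : 0 < α := by linarith
  rw [abs_mul, abs_exp]
  rcases le_total 0 u with hu | hu
  · calc exp u * |Theta θ (exp (α * u)) 1| ≤ exp u * (2 * π * (1 / exp (α * u))) := by
          gcongr
          exact abs_Theta_le (exp_pos _) zero_le_one
      _ = 2 * π * exp (-(α - 1) * u) := by
          rw [one_div, ← exp_neg, mul_left_comm, ← exp_add]
          ring_nf
      _ ≤ 2 * π * exp (-(1 - α⁻¹) * |u|) := by
          rw [abs_of_nonneg hu]
          gcongr ?_ * exp (-?_ * _)
          exact one_sub_inv_le_sub_one hα₀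
  · calc exp u * |Theta θ (exp (α * u)) 1| ≤ exp u * π := by
          gcongr
          exact Complex.abs_arg_le_pi _
      _ ≤ 2 * π * exp u := by nlinarith [mul_pos pi_pos (exp_pos u)]
      _ ≤ 2 * π * exp (-(1 - α⁻¹) * |u|) := by
          rw [abs_of_nonpos hu, neg_mul_neg]
          gcongr
          nlinarith [inv_pos.2 hα₀]

lemma integral_indicator_Iio_exp_mul (c : ℝ) :
    ∫ u, (Iio (0 : ℝ)).indicator (fun u ↦ exp u * c) u = c := by
  rw [integral_indicator measurableSet_Iio, integral_mul_const, ← integral_Iic_eq_integral_Iio,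
    integral_exp_Iic_zero, one_mul]

lemma eventually_abs_lt_pi : ∀ᶠ θ in 𝓝[<] π, |θ| < π := by
  filter_upwards [Ioo_mem_nhdsLT pi_pos] with θ hθ
  rw [abs_of_pos hθ.1]
  exact hθ.2

lemma tendsto_integral_exp_mul_Theta_exp (hα : 1 < α) :
    Tendsto (fun θ ↦ ∫ u : ℝ, exp u * Theta θ (exp (α * u)) 1) (𝓝[<] π) (𝓝 π) := by
  have hα₀ : 0 < α := by linarith
  have hpointwise (u : ℝ) (hu : u ≠ 0) : Tendsto (fun θ ↦ exp u * Theta θ (exp (α * u)) 1)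
      (𝓝[<] π) (𝓝 ((Iio (0 : ℝ)).indicator (fun u ↦ exp u * π) u)) := by
    rcases hu.lt_or_gt with hneg | hpos
    · rw [indicator_of_mem (mem_Iio.2 hneg)]
      exact (tendsto_Theta_nhdsLT_pi_of_lt zero_le_one
        (exp_lt_one_iff.2 (mul_neg_of_pos_of_neg hα₀ hneg))).const_mul _
    · rw [indicator_of_notMem (notMem_Iio.2 hpos.le), ← mul_zero (exp u)]
      have hlim := tendsto_Theta_nhds_pi_of_gt (one_lt_exp_iff.2 (mul_pos hα₀ hpos))
      exact (hlim.mono_left nhdsWithin_le_nhds).const_mul _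
  have hmeas : ∀ᶠ θ in 𝓝[<] π,
      AEStronglyMeasurable (fun u : ℝ ↦ exp u * Theta θ (exp (α * u)) 1) := by
    filter_upwards [eventually_abs_lt_pi] with θ hθ
    exact (integrable_exp_mul_Theta_exp hα hθ).aestronglyMeasurable
  have hlim := tendsto_integral_filter_of_dominated_convergence
    (fun u ↦ 2 * π * exp (-(1 - α⁻¹) * |u|)) hmeas
    (.of_forall fun θ ↦ .of_forall (abs_exp_mul_Theta_exp_le hα θ))
    ((integrable_exp_neg_mul_abs (one_sub_inv_pos_of_one_lt hα)).const_mul _)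
    ((Measure.ae_ne volume 0).mono hpointwise)
  rwa [integral_indicator_Iio_exp_mul] at hlim

theorem integral_exp_mul_log_one_add_exp (hα : 1 < α) :
    ∫ u : ℝ, exp u * log (1 + exp (-(α * u))) = π / sin (π / α) := by
  have hsin : 0 < sin (π / α) :=
    sin_pos_of_pos_of_lt_pi (div_pos pi_pos (by linarith)) (div_lt_self pi_pos hα)
  have hcont : Tendsto (fun θ ↦ sin (θ / α) * ∫ u : ℝ, exp u * log (1 + exp (-(α * u))))
      (𝓝[<] π) (𝓝 (sin (π / α) * ∫ u : ℝ, exp u * log (1 + exp (-(α * u))))) :=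
    (Continuous.tendsto (by fun_prop) π).mono_left nhdsWithin_le_nhds
  rw [eq_div_iff hsin.ne', mul_comm]
  refine tendsto_nhds_unique hcont ((tendsto_integral_exp_mul_Theta_exp hα).congr' ?_)
  filter_upwards [eventually_abs_lt_pi] with θ hθ
  exact integral_exp_mul_Theta_exp_eq_sin_mul hα hθ

end ThetaIntegral

section Drift

variable {α θ : ℝ}

section

variable (hα : 1 < α) (hθ : |θ| < π)
include hα hθ

lemma integrableOn_Theta_rpow : IntegrableOn (fun s : ℝ ↦ Theta θ (s ^ α) 1) (Ioi 0) := by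
  rw [← integrable_exp_smul_comp_exp_iff]
  simpa only [← exp_mul, mul_comm _ α, smul_eq_mul] using integrable_exp_mul_Theta_exp hα hθ

theorem Drift_eq_sin_div_sin : Drift θ α = sin (θ / α) / sin (π / α) := by
  have hintegral := integral_exp_smul_comp_exp fun s : ℝ ↦ Theta θ (s ^ α) 1
  simp only [← exp_mul, mul_comm _ α, smul_eq_mul] at hintegral
  rw [Drift, ← hintegral, integral_exp_mul_Theta_exp_eq_sin_mul hα hθ,
    integral_exp_mul_log_one_add_exp hα]
  field_simp

end

lemma Drift_one_add_div_pi (hθ : 0 < θ) (hθπ : θ < π) : Drift θ (1 + θ / π) = 1 := by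
  have hα : 1 < 1 + θ / π := lt_add_of_pos_right 1 (div_pos hθ pi_pos)
  have hreflect : θ / (1 + θ / π) = π - π / (1 + θ / π) := by
    field_simp
    ring
  have hsin : 0 < sin (π / (1 + θ / π)) :=
    sin_pos_of_pos_of_lt_pi (div_pos pi_pos (by linarith)) (div_lt_self pi_pos hα)
  rw [Drift_eq_sin_div_sin hα (by rwa [abs_of_pos hθ]), hreflect, sin_pi_sub, div_self hsin.ne']

end Drift

section RiemannSum

lemma ofReal_integral_Ioi_le_tsum_ofReal {f : ℝ → ℝ} {a : ℝ} (hf : AntitoneOn f (Ici a))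
    (hint : IntegrableOn f (Ioi a)) (hnonneg : ∀ x ∈ Ici a, 0 ≤ f x) :
    ENNReal.ofReal (∫ x in Ioi a, f x) ≤ ∑' k : ℕ, ENNReal.ofReal (f (k + a)) := by
  have hmem {x : ℝ} (hx : x ∈ Ici 0) : x + a ∈ Ici a := le_add_of_nonneg_left hx
  have hanti : AntitoneOn (fun x ↦ f (x + a)) (Ici 0) :=
    fun x hx y hy hxy ↦ hf (hmem hx) (hmem hy) (by gcongr)
  have htranslate := measurePreserving_add_right volume a
  have hpreimage : (· + a) ⁻¹' Ioi a = Ioi 0 := by simp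
  have hint₀ : IntegrableOn (fun x ↦ f (x + a)) (Ioi 0) := by
    rw [← hpreimage]
    exact (htranslate.integrableOn_comp_preimage (measurableEmbedding_addRight a)).2 hint
  have hnonneg₀ (x : ℝ) (hx : x ∈ Ici 0) : 0 ≤ f (x + a) := hnonneg _ (hmem hx)
  have hsum := hanti.summable_of_integrableOn_Ioi_zero hint₀
    fun x hx ↦ hnonneg₀ x (Ioi_subset_Ici_self hx)
  rw [← ENNReal.ofReal_tsum_of_nonneg (fun k : ℕ ↦ hnonneg₀ k (mem_Ici.2 k.cast_nonneg)) hsum,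
    ← htranslate.setIntegral_preimage_emb (measurableEmbedding_addRight a), hpreimage]
  exact ENNReal.ofReal_le_ofReal
    (hanti.integral_le_tsum hsum fun x hx ↦ hnonneg₀ x (Ioi_subset_Ici_self hx))

variable {α θ E A : ℝ}

lemma Theta_rpow_rpow {x : ℝ} (hx : 0 ≤ x) (hE : 0 < E) :
    Theta θ (x ^ α) (E ^ α) = Theta θ ((E⁻¹ * x) ^ α) 1 := by
  have h := Theta_mul_mul (θ := θ) (a := (E⁻¹ * x) ^ α) (b := 1) (rpow_pos_of_pos hE α)
  rwa [← mul_rpow hE.le (by positivity), mul_inv_cancel_left₀ hE.ne', mul_one] at h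

lemma integrableOn_Theta_rpow_rpow (hα : 1 < α) (hθ : |θ| < π) (hE : 0 < E) :
    IntegrableOn (fun x : ℝ ↦ Theta θ (x ^ α) (E ^ α)) (Ioi 0) := by
  refine IntegrableOn.congr_fun ?_
    (fun x hx ↦ (Theta_rpow_rpow (le_of_lt hx) hE).symm) measurableSet_Ioi
  rw [integrableOn_Ioi_comp_mul_left_iff (fun s : ℝ ↦ Theta θ (s ^ α) 1) 0 (inv_pos.2 hE),
    mul_zero]
  exact integrableOn_Theta_rpow hα hθ

lemma integral_Theta_rpow_rpow (hE : 0 < E) :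
    ∫ x in Ioi 0, Theta θ (x ^ α) (E ^ α) = π * (E * Drift θ α) := by
  rw [setIntegral_congr_fun measurableSet_Ioi fun x hx ↦ Theta_rpow_rpow (le_of_lt hx) hE,
    integral_comp_mul_left_Ioi (fun s : ℝ ↦ Theta θ (s ^ α) 1) 0 (inv_pos.2 hE), mul_zero,
    inv_inv, Drift, smul_eq_mul]
  field_simp

lemma antitoneOn_Theta_rpow (hθ : 0 < θ) (hθπ : θ < π) (hα : 0 ≤ α) (hE : 0 < E) :
    AntitoneOn (fun x : ℝ ↦ Theta θ (x ^ α) E) (Ici 0) :=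
  fun _ hx _ _ hxy ↦ antitone_Theta hθ hθπ hE (rpow_le_rpow hx hxy hα)

lemma sub_le_integral_Ioi_Theta_rpow (hθ : 0 < θ) (hθπ : θ < π) (hα : 1 < α) (hE : 0 < E)
    {a : ℝ} (ha : 0 ≤ a) :
    π * (E * Drift θ α) - θ * a ≤ ∫ x in Ioi a, Theta θ (x ^ α) (E ^ α) := by
  have hint := integrableOn_Theta_rpow_rpow hα (by rwa [abs_of_pos hθ]) hE
  have hinit : ∫ x in Ioc 0 a, Theta θ (x ^ α) (E ^ α) ≤ θ * a := by
    calc ∫ x in Ioc 0 a, Theta θ (x ^ α) (E ^ α) ≤ ∫ _ in Ioc 0 a, θ :=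
          setIntegral_mono_on (hint.mono_set Ioc_subset_Ioi_self) (integrableOn_const (by simp))
            measurableSet_Ioc fun x hx ↦
              Theta_le hθ hθπ (rpow_pos_of_pos hE α) (rpow_nonneg hx.1.le α)
      _ = θ * a := by simp [ha, mul_comm]
  have hsplit := setIntegral_union (Ioc_disjoint_Ioi le_rfl) measurableSet_Ioi
    (hint.mono_set Ioc_subset_Ioi_self) (hint.mono_set (Ioi_subset_Ioi ha))
  rw [Ioc_union_Ioi_eq_Ioi ha, integral_Theta_rpow_rpow hE] at hsplit
  linarith

theorem ofReal_Drift_sub_le_phi (hθ : 0 < θ) (hθπ : θ < π) (hα : 1 < α) (hA : -1 ≤ A)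
    {Y : ℕ → ℝ} {j : ℕ} (hY : 0 < Y j) :
    ENNReal.ofReal (Y j * Drift θ α - θ / π * (1 + A)) ≤
      phi θ (fun k ↦ (k + A) ^ α) (fun k ↦ Y k ^ α) j := by
  have ha : 0 ≤ 1 + A := by linarith
  have hscale : Y j * Drift θ α - θ / π * (1 + A) =
      1 / π * (π * (Y j * Drift θ α) - θ * (1 + A)) := by field_simp
  rw [hscale, ENNReal.ofReal_mul (by positivity), phi]
  gcongr
  have hint : IntegrableOn (fun x : ℝ ↦ Theta θ (x ^ α) (Y j ^ α)) (Ioi (1 + A)) :=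
    (integrableOn_Theta_rpow_rpow hα (by rwa [abs_of_pos hθ]) hY).mono_set (Ioi_subset_Ioi ha)
  have hsum := ofReal_integral_Ioi_le_tsum_ofReal
    ((antitoneOn_Theta_rpow hθ hθπ (by linarith) (rpow_pos_of_pos hY α)).mono
      (Ici_subset_Ici.2 ha)) hint
    fun x _ ↦ Theta_nonneg hθ.le hθπ.le (rpow_nonneg hY.le α)
  simp only [← add_assoc] at hsum
  simpa only [Nat.cast_add, Nat.cast_one] using
    (ENNReal.ofReal_le_ofReal (sub_le_integral_Ioi_Theta_rpow hθ hθπ hα hY ha)).trans hsum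

end RiemannSum

end

theorem stmt_13 (θ : ℝ) (hθ : 0 < θ) (hθπ : θ < Real.pi)
    (Q : ℕ → ℝ) (hQpos : ∀ k, 1 ≤ k → 0 < Q k)
    (K : ℝ) (hK : 0 < K) (hQK : ∀ j : ℕ, 1 ≤ j → Q j ≤ (j : ℝ) + K) :
    ∃ A₀ : ℝ, 0 < A₀ ∧ ∀ A : ℝ, A₀ ≤ A → ∀ j : ℕ, 1 ≤ j →
      ENNReal.ofReal (Q j) ≤
        phi θ (fun k : ℕ => ((k : ℝ) + A) ^ (1 + θ / Real.pi))
          (fun k : ℕ => ((k : ℝ) + A) ^ (1 + θ / Real.pi)) j := by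
  have hgap : 0 < Real.pi - θ := sub_pos.2 hθπ
  have hA₀ : 0 < (Real.pi * K + θ) / (Real.pi - θ) := by positivity
  refine ⟨_, hA₀, fun A hA j hj ↦ ?_⟩
  have hα : 1 < 1 + θ / Real.pi := lt_add_of_pos_right 1 (by positivity)
  have hApos : 0 < A := hA₀.trans_le hA
  have hQ : Q j ≤ (j + A) * Drift θ (1 + θ / Real.pi) - θ / Real.pi * (1 + A) := by
    have hshift : K + θ / Real.pi * (1 + A) ≤ A := by
      rw [div_le_iff₀ hgap] at hA
      field_simp
      linarith
    rw [Drift_one_add_div_pi hθ hθπ, mul_one]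
    linarith [hQK j hj]
  exact (ENNReal.ofReal_le_ofReal hQ).trans <|
    ofReal_Drift_sub_le_phi (Y := fun k ↦ k + A) hθ hθπ hα (by linarith) (by positivity)
end
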